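/- Completing convergence (Lemma 4, Eq. 16): Suppose π* is a policy maximizing J, i.e. J(π*) ≥ J(π) for every policy π. Then for every integer M ≥ 1, (1/M) ∑_{m=0}^{M−1} ( J(π*) − ∑_{s : p(s)>0} p(s) B_{priorᵐ, πᵐ⁺¹}V(s) ) ≤ (1/(M·β)) ∑_{s : p(s)>0} p(s) · max_{a∈A} log(1/π⁰(a|s)). -/

import Mathlib

open Finset

/-- A probability distribution on a finite type: nonnegative and sums to one. -/
def IsDist {X : Type*} [Fintype X] (d : X → ℝ) : Prop :=
  (∀ x, 0 ≤ d x) ∧ ∑ x, d x = 1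

/-- Kullback–Leibler divergence: sum over points where `μ` is positive. -/
noncomputable def KL {X : Type*} [Fintype X] (μ ν : X → ℝ) : ℝ :=
  ∑ x, if 0 < μ x then μ x * Real.log (μ x / ν x) else 0

/-- Marginal action distribution of policy `π` under state distribution `p`. -/
noncomputable def margPol {S A : Type*} [Fintype S] [Fintype A]
    (p : S → ℝ) (π : S → A → ℝ) (a : A) : ℝ :=
  ∑ s, p s * π s a

/-- Evaluation operator `B_{q,π} V (s)` (with `F s a = R s a + γ 𝔼[V]` precomputed). -/
noncomputable def Beval {S A : Type*} [Fintype S] [Fintype A]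
    (F : S → A → ℝ) (β : ℝ) (q : A → ℝ) (π : S → A → ℝ) (s : S) : ℝ :=
  ∑ a, if 0 < π s a then π s a * (F s a - (1 / β) * Real.log (π s a / q a)) else 0

/-- Mutual-information-regularized objective `J(π)`. -/
noncomputable def Jobj {S A : Type*} [Fintype S] [Fintype A]
    (p : S → ℝ) (F : S → A → ℝ) (β : ℝ) (π : S → A → ℝ) : ℝ :=
  ∑ s, if 0 < p s then
    p s * ∑ a, (if 0 < π s a then
      π s a * (F s a - (1 / β) * Real.log (π s a / margPol p π a)) else 0)
  else 0

/-- Blahut–Arimoto policy iterates. -/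
noncomputable def BApol {S A : Type*} [Fintype S] [Fintype A]
    (p : S → ℝ) (F : S → A → ℝ) (β : ℝ) (π0 : S → A → ℝ) : ℕ → S → A → ℝ
  | 0 => π0
  | m + 1 => fun s a =>
      ((∑ s', p s' * BApol p F β π0 m s' a) * Real.exp (β * F s a)) /
        ∑ a', (∑ s', p s' * BApol p F β π0 m s' a') * Real.exp (β * F s a')

/-- Blahut–Arimoto prior iterates: the marginal of the `m`-th policy under `p`. -/
noncomputable def BAprior {S A : Type*} [Fintype S] [Fintype A]
    (p : S → ℝ) (F : S → A → ℝ) (β : ℝ) (π0 : S → A → ℝ) (m : ℕ) (a : A) : ℝ :=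
  ∑ s, p s * BApol p F β π0 m s a

/-!
Fix any comparison policy `π`, with marginal `m_π`, and let `q` be a prior with Gibbs policy
`π'(a|s) ∝ q(a) exp(β F(s,a))`. The Gibbs variational identity for `B_{q,π}` and the decomposition
`∑ₛ p(s) KL(πₛ‖q) = ∑ₛ p(s) KL(πₛ‖m_π) + KL(m_π‖q)` give the exact formula
`J(π) - ∑ₛ p(s) B_{q,π'}(s) = (KL(m_π‖q) - ∑ₛ p(s) KL(πₛ‖π'ₛ)) / β`.
When `q` is the marginal of the current iterate `πᵐ` and `π' = πᵐ⁺¹`, the log-sum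
inequality bounds `KL(m_π‖q)` by `∑ₛ p(s) KL(πₛ‖πᵐₛ)`, so that the gaps telescope.
-/

lemma sum_ite_pos_mul {ι : Type*} [Fintype ι] {w : ι → ℝ} (hw : ∀ i, 0 ≤ w i) (f : ι → ℝ) :
    (∑ i, if 0 < w i then w i * f i else 0) = ∑ i, w i * f i := by
  refine sum_congr rfl fun i _ => ?_
  rcases (hw i).eq_or_lt with hi | hi
  · simp [← hi]
  · rw [if_pos hi]

lemma IsDist.le_one {X : Type*} [Fintype X] {μ : X → ℝ} (hμ : IsDist μ) (x : X) : μ x ≤ 1 :=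
  hμ.2 ▸ single_le_sum (fun y _ => hμ.1 y) (mem_univ x)

lemma IsDist.exists_pos {X : Type*} [Fintype X] {μ : X → ℝ} (hμ : IsDist μ) : ∃ x, 0 < μ x := by
  obtain ⟨x, -, hx⟩ := (sum_pos_iff_of_nonneg fun x _ => hμ.1 x).1 (hμ.2 ▸ one_pos)
  exact ⟨x, hx⟩

/-! ### Kullback–Leibler divergence of finite weights -/

lemma sum_mul_log_sum_div_sum_le {ι : Type*} {t : Finset ι} {a b : ι → ℝ}
    (ha : ∀ i ∈ t, 0 ≤ a i) (hb : ∀ i ∈ t, 0 ≤ b i) (hab : ∀ i ∈ t, b i = 0 → a i = 0) :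
    (∑ i ∈ t, a i) * Real.log ((∑ i ∈ t, a i) / ∑ i ∈ t, b i) ≤
      ∑ i ∈ t, a i * Real.log (a i / b i) := by
  have mul_ratio : ∀ i ∈ t, b i * (a i / b i) = a i := fun i hi =>
    mul_div_cancel_of_imp' (hab i hi)
  have mul_ratio_mul_log : ∀ i ∈ t, b i * (a i / b i) * Real.log (a i / b i) =
      a i * Real.log (a i / b i) := fun i hi => by rw [mul_ratio i hi]
  rcases (sum_nonneg hb).eq_or_lt with hB | hB
  · have hb0 := (sum_eq_zero_iff_of_nonneg hb).1 hB.symm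
    have ha0 : ∀ i ∈ t, a i = 0 := fun i hi => hab i hi (hb0 i hi)
    rw [sum_eq_zero ha0, zero_mul]
    exact (sum_eq_zero fun i hi => by rw [ha0 i hi, zero_mul]).ge
  · have jensen := Real.convexOn_mul_log.map_centerMass_le hb hB
      fun i hi => Set.mem_Ici.2 (div_nonneg (ha i hi) (hb i hi))
    simp only [centerMass, Function.comp_apply, smul_eq_mul, ← mul_assoc] at jensen
    rw [sum_congr rfl mul_ratio, sum_congr rfl mul_ratio_mul_log, mul_assoc,
      ← div_eq_inv_mul (∑ i ∈ t, a i)] at jensen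
    exact le_of_mul_le_mul_left jensen (inv_pos.2 hB)

section KL

variable {X : Type*} [Fintype X] {μ ν : X → ℝ}

lemma KL_eq_sum (hμ : ∀ x, 0 ≤ μ x) (ν : X → ℝ) : KL μ ν = ∑ x, μ x * Real.log (μ x / ν x) :=
  sum_ite_pos_mul hμ _

lemma KL_self (μ : X → ℝ) : KL μ μ = 0 :=
  sum_eq_zero fun x _ => by
    split_ifs with hx
    · rw [div_self hx.ne', Real.log_one, mul_zero]
    · rfl

lemma KL_nonneg (hμ : IsDist μ) (hν : IsDist ν) (hac : ∀ x, ν x = 0 → μ x = 0) : 0 ≤ KL μ ν := by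
  have logSum := sum_mul_log_sum_div_sum_le (t := univ) (fun x _ => hμ.1 x) (fun x _ => hν.1 x)
    fun x _ => hac x
  rwa [hμ.2, hν.2, div_one, Real.log_one, mul_zero, ← KL_eq_sum hμ.1] at logSum

lemma KL_le_sup'_log_inv [Nonempty X] (hμ : IsDist μ) (hν : ∀ x, 0 < ν x) :
    KL μ ν ≤ univ.sup' univ_nonempty fun x => Real.log (1 / ν x) := by
  set C := univ.sup' univ_nonempty fun x => Real.log (1 / ν x)
  have log_ratio_le (x : X) (hx : 0 < μ x) : Real.log (μ x / ν x) ≤ C :=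
    calc Real.log (μ x / ν x)
      _ ≤ Real.log (1 / ν x) :=
        Real.log_le_log (div_pos hx (hν x)) (div_le_div_of_nonneg_right (hμ.le_one x) (hν x).le)
      _ ≤ C := le_sup' (fun x => Real.log (1 / ν x)) (mem_univ x)
  calc KL μ ν
    _ ≤ ∑ x, μ x * C := sum_le_sum fun x _ => by
      split_ifs with hx
      · exact mul_le_mul_of_nonneg_left (log_ratio_le x hx) hx.le
      · rw [le_antisymm (not_lt.1 hx) (hμ.1 x), zero_mul]
    _ = C := by rw [← sum_mul, hμ.2, one_mul]

end KL

section Marginal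

variable {S A : Type*} [Fintype S] [Fintype A] {p : S → ℝ} {π ρ : S → A → ℝ}

lemma margPol_nonneg (hp : ∀ s, 0 ≤ p s) (hπ : ∀ s a, 0 ≤ π s a) (a : A) : 0 ≤ margPol p π a :=
  sum_nonneg fun s _ => mul_nonneg (hp s) (hπ s a)

lemma margPol_pos (hp : IsDist p) (hπ : ∀ s a, 0 < π s a) (a : A) : 0 < margPol p π a := by
  obtain ⟨s, hs⟩ := hp.exists_pos
  exact sum_pos' (fun s _ => mul_nonneg (hp.1 s) (hπ s a).le)
    ⟨s, mem_univ s, mul_pos hs (hπ s a)⟩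

lemma KL_margPol_le (hp : ∀ s, 0 ≤ p s) (hπ : ∀ s a, 0 ≤ π s a) (hρ : ∀ s a, 0 ≤ ρ s a)
    (hac : ∀ s a, ρ s a = 0 → π s a = 0) :
    KL (margPol p π) (margPol p ρ) ≤ ∑ s, p s * KL (π s) (ρ s) := by
  have cancel (s : S) (a : A) : p s * π s a * Real.log (p s * π s a / (p s * ρ s a)) =
      p s * (π s a * Real.log (π s a / ρ s a)) := by
    rcases eq_or_ne (p s) 0 with hs | hs
    · simp [hs]
    · rw [mul_div_mul_left _ _ hs, mul_assoc]
  calc KL (margPol p π) (margPol p ρ)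
    _ = ∑ a, margPol p π a * Real.log (margPol p π a / margPol p ρ a) :=
      KL_eq_sum (margPol_nonneg hp hπ) _
    _ ≤ ∑ a, ∑ s, p s * π s a * Real.log (p s * π s a / (p s * ρ s a)) :=
      sum_le_sum fun a _ => sum_mul_log_sum_div_sum_le
        (fun s _ => mul_nonneg (hp s) (hπ s a)) (fun s _ => mul_nonneg (hp s) (hρ s a))
        fun s _ h => mul_eq_zero.2 ((mul_eq_zero.1 h).imp_right (hac s a))
    _ = ∑ s, p s * KL (π s) (ρ s) := by
      rw [sum_comm]
      simp only [cancel, ← mul_sum, KL_eq_sum (hπ _)]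

lemma sum_mul_KL_eq_add_KL_margPol (hp : ∀ s, 0 ≤ p s) (hπ : ∀ s a, 0 ≤ π s a) {q : A → ℝ}
    (hac : ∀ a, q a = 0 → margPol p π a = 0) :
    ∑ s, p s * KL (π s) q = ∑ s, p s * KL (π s) (margPol p π) + KL (margPol p π) q := by
  have split_log (s : S) (a : A) : p s * (π s a * Real.log (π s a / q a)) =
      p s * (π s a * Real.log (π s a / margPol p π a)) +
        p s * π s a * Real.log (margPol p π a / q a) := by
    rcases eq_or_ne (p s * π s a) 0 with h | h
    · simp only [← mul_assoc, h, zero_mul, add_zero]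
    have hm : margPol p π a ≠ 0 := fun hm =>
      h ((sum_eq_zero_iff_of_nonneg fun s _ => mul_nonneg (hp s) (hπ s a)).1 hm s (mem_univ s))
    have hq : q a ≠ 0 := mt (hac a) hm
    rw [Real.log_div (right_ne_zero_of_mul h) hq, Real.log_div (right_ne_zero_of_mul h) hm,
      Real.log_div hm hq]
    ring
  have marginal_term : KL (margPol p π) q =
      ∑ s, ∑ a, p s * π s a * Real.log (margPol p π a / q a) := by
    rw [KL_eq_sum (margPol_nonneg hp hπ), sum_comm]
    exact sum_congr rfl fun a _ => sum_mul _ _ _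
  simp only [marginal_term, KL_eq_sum (hπ _), mul_sum, split_log, sum_add_distrib]

end Marginal

/-! ### The evaluation operator and Gibbs policies -/

/-- The normalizing constant `∑ₐ q(a) exp(β F(s,a))` of the Gibbs policy at the state `s`. -/
noncomputable def partitionFn {S A : Type*} [Fintype A]
    (F : S → A → ℝ) (β : ℝ) (q : A → ℝ) (s : S) : ℝ :=
  ∑ a, q a * Real.exp (β * F s a)

/-- The Gibbs policy with prior `q`, energy `-F` and inverse temperature `β`. It maximizes
`B_{q,·}`, and one Blahut–Arimoto step replaces a policy by the Gibbs policy of its marginal. -/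
noncomputable def gibbsPol {S A : Type*} [Fintype A]
    (F : S → A → ℝ) (β : ℝ) (q : A → ℝ) (s : S) (a : A) : ℝ :=
  q a * Real.exp (β * F s a) / partitionFn F β q s

section Gibbs

variable {S A : Type*} [Fintype A] {F : S → A → ℝ} {β : ℝ} {q : A → ℝ}

lemma partitionFn_pos [Nonempty A] (hq : ∀ a, 0 < q a) (s : S) : 0 < partitionFn F β q s :=
  sum_pos (fun a _ => mul_pos (hq a) (Real.exp_pos _)) univ_nonempty

lemma gibbsPol_pos [Nonempty A] (hq : ∀ a, 0 < q a) (s : S) (a : A) : 0 < gibbsPol F β q s a :=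
  div_pos (mul_pos (hq a) (Real.exp_pos _)) (partitionFn_pos hq s)

lemma isDist_gibbsPol [Nonempty A] (hq : ∀ a, 0 < q a) (s : S) : IsDist (gibbsPol F β q s) := by
  refine ⟨fun a => (gibbsPol_pos hq s a).le, ?_⟩
  simp only [gibbsPol, ← sum_div]
  exact div_self (partitionFn_pos hq s).ne'

lemma log_gibbsPol [Nonempty A] (hq : ∀ a, 0 < q a) (s : S) (a : A) :
    Real.log (gibbsPol F β q s a) =
      Real.log (q a) + β * F s a - Real.log (partitionFn F β q s) := by
  rw [gibbsPol, Real.log_div (mul_pos (hq a) (Real.exp_pos _)).ne' (partitionFn_pos hq s).ne',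
    Real.log_mul (hq a).ne' (Real.exp_ne_zero _), Real.log_exp]

end Gibbs

section Evaluation

variable {S A : Type*} [Fintype S] [Fintype A] {F : S → A → ℝ} {β : ℝ} {q : A → ℝ}
  {p : S → ℝ} {π : S → A → ℝ}

lemma Beval_eq_sum_sub_KL {s : S} (hπ : ∀ a, 0 ≤ π s a) :
    Beval F β q π s = ∑ a, π s a * F s a - 1 / β * KL (π s) q := by
  rw [Beval, sum_ite_pos_mul hπ, KL_eq_sum hπ, mul_sum, ← sum_sub_distrib]
  exact sum_congr rfl fun a _ => by ring

lemma Beval_eq_log_partitionFn_sub_KL [Nonempty A] (hβ : β ≠ 0) (hq : ∀ a, 0 < q a) {s : S}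
    (hπ : IsDist (π s)) :
    Beval F β q π s =
      1 / β * (Real.log (partitionFn F β q s) - KL (π s) (gibbsPol F β q s)) := by
  have tilt (a : A) : π s a * (F s a - 1 / β * Real.log (π s a / q a)) =
      1 / β * (π s a * Real.log (partitionFn F β q s) -
        π s a * Real.log (π s a / gibbsPol F β q s a)) := by
    rcases eq_or_ne (π s a) 0 with ha | ha
    · simp [ha]
    rw [Real.log_div ha (hq a).ne', Real.log_div ha (gibbsPol_pos hq s a).ne', log_gibbsPol hq]
    field_simp
    ring
  rw [Beval, sum_ite_pos_mul hπ.1, KL_eq_sum hπ.1, sum_congr rfl fun a _ => tilt a, ← mul_sum,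
    sum_sub_distrib, ← sum_mul, hπ.2, one_mul]

lemma Beval_gibbsPol [Nonempty A] (hβ : β ≠ 0) (hq : ∀ a, 0 < q a) (s : S) :
    Beval F β q (gibbsPol F β q) s = 1 / β * Real.log (partitionFn F β q s) := by
  rw [Beval_eq_log_partitionFn_sub_KL hβ hq (isDist_gibbsPol hq s), KL_self, sub_zero]

lemma Jobj_eq_sum_Beval (hp : ∀ s, 0 ≤ p s) (F : S → A → ℝ) (β : ℝ) (π : S → A → ℝ) :
    Jobj p F β π = ∑ s, p s * Beval F β (margPol p π) π s :=
  sum_ite_pos_mul hp _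

lemma Jobj_eq_sum_Beval_add_KL (hp : ∀ s, 0 ≤ p s) (hπ : ∀ s a, 0 ≤ π s a)
    (hac : ∀ a, q a = 0 → margPol p π a = 0) :
    Jobj p F β π = ∑ s, p s * Beval F β q π s + 1 / β * KL (margPol p π) q := by
  have compensation := sum_mul_KL_eq_add_KL_margPol hp hπ hac
  simp only [Jobj_eq_sum_Beval hp, Beval_eq_sum_sub_KL (hπ _), mul_sub, sum_sub_distrib,
    mul_left_comm _ (1 / β), ← mul_sum]
  rw [compensation]
  ring

lemma Jobj_sub_sum_Beval_gibbsPol [Nonempty A] (hp : ∀ s, 0 ≤ p s) (hβ : β ≠ 0)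
    (hq : ∀ a, 0 < q a) (hπ : ∀ s, IsDist (π s)) :
    Jobj p F β π - ∑ s, p s * Beval F β q (gibbsPol F β q) s =
      1 / β * (KL (margPol p π) q - ∑ s, p s * KL (π s) (gibbsPol F β q s)) := by
  rw [Jobj_eq_sum_Beval_add_KL hp (fun s => (hπ s).1) fun a ha => absurd ha (hq a).ne']
  simp only [Beval_gibbsPol hβ hq, Beval_eq_log_partitionFn_sub_KL hβ hq (hπ _), mul_sub,
    sum_sub_distrib, mul_left_comm _ (1 / β), ← mul_sum]
  ring

end Evaluation

/-! ### Blahut–Arimoto iterates -/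

section BlahutArimoto

variable {S A : Type*} [Fintype S] [Fintype A]

lemma BApol_succ (p : S → ℝ) (F : S → A → ℝ) (β : ℝ) (π0 : S → A → ℝ) (m : ℕ) :
    BApol p F β π0 (m + 1) = gibbsPol F β (BAprior p F β π0 m) :=
  rfl

variable [Nonempty A] {p : S → ℝ} {F : S → A → ℝ} {β : ℝ} {π0 : S → A → ℝ}

lemma BApol_pos (hp : IsDist p) (hπ0 : ∀ s a, 0 < π0 s a) (m : ℕ) (s : S) (a : A) :
    0 < BApol p F β π0 m s a := by
  induction m generalizing s a with
  | zero => exact hπ0 s a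
  | succ m ih => exact gibbsPol_pos (margPol_pos hp ih) s a

lemma BAprior_pos (hp : IsDist p) (hπ0 : ∀ s a, 0 < π0 s a) (m : ℕ) (a : A) :
    0 < BAprior p F β π0 m a :=
  margPol_pos hp (BApol_pos hp hπ0 m) a

lemma isDist_BApol_succ (hp : IsDist p) (hπ0 : ∀ s a, 0 < π0 s a) (m : ℕ) (s : S) :
    IsDist (BApol p F β π0 (m + 1) s) :=
  isDist_gibbsPol (BAprior_pos hp hπ0 m) s

variable {π : S → A → ℝ}

lemma Jobj_sub_sum_Beval_BApol_le (hp : IsDist p) (hβ : 0 < β) (hπ0 : ∀ s a, 0 < π0 s a)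
    (hπ : ∀ s, IsDist (π s)) (m : ℕ) :
    Jobj p F β π - ∑ s, p s * Beval F β (BAprior p F β π0 m) (BApol p F β π0 (m + 1)) s ≤
      1 / β * (∑ s, p s * KL (π s) (BApol p F β π0 m s) -
        ∑ s, p s * KL (π s) (BApol p F β π0 (m + 1) s)) := by
  have hpos := BApol_pos (F := F) (β := β) hp hπ0 m
  have convexity : KL (margPol p π) (BAprior p F β π0 m) ≤
      ∑ s, p s * KL (π s) (BApol p F β π0 m s) :=
    KL_margPol_le hp.1 (fun s => (hπ s).1) (fun s a => (hpos s a).le)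
      fun s a h => absurd h (hpos s a).ne'
  rw [BApol_succ, Jobj_sub_sum_Beval_gibbsPol hp.1 hβ.ne' (BAprior_pos hp hπ0 m) hπ]
  gcongr

lemma sum_range_Jobj_sub_sum_Beval_BApol_le (hp : IsDist p) (hβ : 0 < β)
    (hπ0 : ∀ s a, 0 < π0 s a) (hπ : ∀ s, IsDist (π s)) {M : ℕ} (hM : 1 ≤ M) :
    ∑ m ∈ range M, (Jobj p F β π -
        ∑ s, p s * Beval F β (BAprior p F β π0 m) (BApol p F β π0 (m + 1)) s) ≤
      1 / β * ∑ s, p s * KL (π s) (π0 s) := by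
  obtain ⟨k, rfl⟩ := Nat.exists_eq_add_of_le' hM
  set D : ℕ → ℝ := fun m => ∑ s, p s * KL (π s) (BApol p F β π0 m s)
  have final_nonneg : 0 ≤ D (k + 1) := sum_nonneg fun s _ =>
    mul_nonneg (hp.1 s) (KL_nonneg (hπ s) (isDist_BApol_succ hp hπ0 k s)
      fun a h => absurd h (BApol_pos hp hπ0 (k + 1) s a).ne')
  calc _ ≤ ∑ m ∈ range (k + 1), 1 / β * (D m - D (m + 1)) :=
        sum_le_sum fun m _ => Jobj_sub_sum_Beval_BApol_le hp hβ hπ0 hπ m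
    _ = 1 / β * (D 0 - D (k + 1)) := by rw [← mul_sum, sum_range_sub']
    _ ≤ 1 / β * D 0 := by gcongr; exact sub_le_self _ final_nonneg

end BlahutArimoto

theorem blahut_arimoto_completing_convergence_general
    {S A : Type*} [Fintype S] [Fintype A] [Nonempty A]
    (p : S → ℝ) (hp : IsDist p) (β : ℝ) (hβ : 0 < β) (F : S → A → ℝ)
    (π0 : S → A → ℝ) (hπ0 : ∀ s a, 0 < π0 s a)
    (π : S → A → ℝ) (hπ : ∀ s, IsDist (π s)) (M : ℕ) (hM : 1 ≤ M) :
    (1 / (M : ℝ)) *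
        ∑ m ∈ Finset.range M,
          (Jobj p F β π -
            ∑ s, if 0 < p s then
              p s * Beval F β (BAprior p F β π0 m) (BApol p F β π0 (m + 1)) s else 0)
      ≤ (1 / ((M : ℝ) * β)) *
          ∑ s, (if 0 < p s then
            p s * (Finset.univ.sup' Finset.univ_nonempty
              fun a => Real.log (1 / π0 s a)) else 0) := by
  simp only [sum_ite_pos_mul hp.1]
  rw [← one_div_mul_one_div, mul_assoc]
  gcongr
  calc _ ≤ 1 / β * ∑ s, p s * KL (π s) (π0 s) :=
        sum_range_Jobj_sub_sum_Beval_BApol_le hp hβ hπ0 hπ hM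
    _ ≤ _ := by
      gcongr with s
      · exact hp.1 s
      · exact KL_le_sup'_log_inv (hπ s) (hπ0 s)

/-- Completing convergence (Lemma 4, Eq. 16). -/
theorem blahut_arimoto_completing_convergence
    {S A : Type*} [Fintype S] [Fintype A] [Nonempty S] [Nonempty A]
    (p : S → ℝ) (hp : IsDist p)
    (R : S → A → ℝ) (P : S → A → S → ℝ) (hP : ∀ s a, IsDist (P s a))
    (V : S → ℝ) (β : ℝ) (hβ : 0 < β) (γ : ℝ) (hγ : 0 < γ ∧ γ < 1)
    (F : S → A → ℝ) (hF : ∀ s a, F s a = R s a + γ * ∑ s', P s a s' * V s')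
    (π0 : S → A → ℝ) (hπ0 : ∀ s, IsDist (π0 s)) (hπ0pos : ∀ s a, 0 < π0 s a)
    (πstar : S → A → ℝ) (hπstar : ∀ s, IsDist (πstar s))
    (hopt : ∀ π : S → A → ℝ, (∀ s, IsDist (π s)) → Jobj p F β π ≤ Jobj p F β πstar)
    (M : ℕ) (hM : 1 ≤ M) :
    (1 / (M : ℝ)) *
        ∑ m ∈ Finset.range M,
          (Jobj p F β πstar -
            ∑ s, if 0 < p s then
              p s * Beval F β (BAprior p F β π0 m) (BApol p F β π0 (m + 1)) s else 0)
      ≤ (1 / ((M : ℝ) * β)) *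
          ∑ s, (if 0 < p s then
            p s * (Finset.univ.sup' Finset.univ_nonempty
              fun a => Real.log (1 / π0 s a)) else 0) :=
  blahut_arimoto_completing_convergence_general p hp β hβ F π0 hπ0pos πstar hπstar M hM
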